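/- Let φ : a → a be an e-equivariant endomorphism of a, and suppose there exists an F-linear map λ : g → a with φ(β(x, y)) = ⁅s x, λ y⁆ - ⁅s y, λ x⁆ - λ⁅x, y⁆ for all x, y ∈ g. Then there exists a Lie algebra endomorphism f : e → e with f(x) - x ∈ a for all x ∈ e and f(m) = m + φ(m) for all m ∈ a. -/

import Mathlib

/-- The 2-cochain associated to a linear section `s` of the projection `e → e/a`:
`β x y = ⁅s x, s y⁆ - s ⁅x, y⁆`. -/
def lieBeta {F : Type*} [Field F]
    {e : Type*} [LieRing e] [LieAlgebra F e]
    (a : LieIdeal F e) (s : (e ⧸ a) →ₗ[F] e) (x y : e ⧸ a) : e :=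
  ⁅s x, s y⁆ - s ⁅x, y⁆

/-!
Put `D x = φ (x - s (p x)) + l (p x)`. The bracket of `x = s (p x) + (x - s (p x))` with the
analogous decomposition of `y` shows that `x ↦ x - s (p x)` fails to be a derivation into the ideal
exactly by `β` and by a bracket of two elements of the ideal. Applying `φ` kills the second term,
since the ideal acts trivially on the target, and the coboundary hypothesis says that `l ∘ p`
absorbs the first. So `D` is a derivation extending `φ`, and `id + D` is a Lie algebra endomorphism
because the term `⁅D x, D y⁆` vanishes in an abelian ideal.
-/

section Retraction

variable {R L M : Type*} [CommRing R] [LieRing L] [AddCommGroup M] [Module R M]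
  [LieRingModule L M] {N : LieSubmodule R L M} {s : (M ⧸ N) →ₗ[R] M}
  (hs : Function.RightInverse s (LieSubmodule.Quotient.mk (N := N)))

include hs in
theorem sub_section_mk_mem (x : M) : x - s (LieSubmodule.Quotient.mk x) ∈ N :=
  (Submodule.Quotient.eq N.toSubmodule).1 (hs _).symm

/-- The linear retraction `x ↦ x - s (p x)` of `M` onto a Lie submodule `N` determined by a linear
section `s` of the projection `p : M → M ⧸ N`. -/
def sectionRetraction : M →ₗ[R] N :=
  (LinearMap.id - s ∘ₗ N.toSubmodule.mkQ).codRestrict N.toSubmodule (sub_section_mk_mem hs)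

theorem coe_sectionRetraction (x : M) :
    (sectionRetraction hs x : M) = x - s (LieSubmodule.Quotient.mk x) :=
  rfl

theorem sectionRetraction_coe (n : N) : sectionRetraction hs n = n := by
  apply Subtype.ext
  rw [coe_sectionRetraction, LieSubmodule.Quotient.mk_eq_zero'.2 n.2, map_zero, sub_zero]

end Retraction

section Derivation

variable {R L M : Type*} [CommRing R] [LieRing L] [LieAlgebra R L] {I : LieIdeal R L}
  {s : (L ⧸ I) →ₗ[R] L} (hs : Function.RightInverse s (LieSubmodule.Quotient.mk (N := I)))

include hs in
theorem lie_section_sub_section_lie_mem (x y : L ⧸ I) : ⁅s x, s y⁆ - s ⁅x, y⁆ ∈ I := by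
  apply (Submodule.Quotient.eq I.toSubmodule).1
  change LieSubmodule.Quotient.mk ⁅s x, s y⁆ = LieSubmodule.Quotient.mk (s ⁅x, y⁆)
  rw [LieSubmodule.Quotient.mk_bracket, hs, hs, hs]

/-- The cocycle `β` of a linear section `s` of `L → L ⧸ I`, measuring the failure of `s` to be a
Lie algebra homomorphism. It is `lieBeta` with values taken in `I` rather than in `L`. -/
def sectionCocycle (x y : L ⧸ I) : I :=
  ⟨⁅s x, s y⁆ - s ⁅x, y⁆, lie_section_sub_section_lie_mem hs x y⟩

theorem sectionRetraction_lie (x y : L) :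
    sectionRetraction hs ⁅x, y⁆ =
      sectionCocycle hs (LieSubmodule.Quotient.mk x) (LieSubmodule.Quotient.mk y) +
        ⁅x, sectionRetraction hs y⁆ - ⁅y, sectionRetraction hs x⁆ -
        ⁅sectionRetraction hs x, sectionRetraction hs y⁆ := by
  apply Subtype.ext
  simp only [LieSubmodule.coe_sub, LieSubmodule.coe_add, LieSubmodule.coe_bracket,
    LieIdeal.coe_bracket_of_module, coe_sectionRetraction, sectionCocycle,
    LieSubmodule.Quotient.mk_bracket, lie_sub, sub_lie]
  rw [← lie_skew y x, ← lie_skew y (s _)]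
  abel

variable [AddCommGroup M] [LieRingModule L M] [LieModule.IsTrivial I M]

include hs in
theorem section_mk_lie (x : L) (m : M) : ⁅s (LieSubmodule.Quotient.mk x), m⁆ = ⁅x, m⁆ := by
  have hx : ⁅x - s (LieSubmodule.Quotient.mk x), m⁆ = 0 :=
    trivial_lie_zero I M ⟨_, sub_section_mk_mem hs x⟩ m
  rw [sub_lie, sub_eq_zero] at hx
  exact hx.symm

variable [Module R M]

theorem map_sectionRetraction_lie (φ : I →ₗ⁅R,L⁆ M) (x y : L) :
    φ (sectionRetraction hs ⁅x, y⁆) =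
      φ (sectionCocycle hs (LieSubmodule.Quotient.mk x) (LieSubmodule.Quotient.mk y)) +
        ⁅x, φ (sectionRetraction hs y)⁆ - ⁅y, φ (sectionRetraction hs x)⁆ := by
  have hφ (m n : I) : φ ⁅m, n⁆ = 0 :=
    (φ.map_lie (m : L) n).trans (trivial_lie_zero I M m (φ n))
  rw [sectionRetraction_lie, map_sub, map_sub, map_add, hφ, sub_zero, φ.map_lie, φ.map_lie]

variable [LieModule R L M] (φ : I →ₗ⁅R,L⁆ M) (l : (L ⧸ I) →ₗ[R] M)
  (hl : ∀ x y, φ (sectionCocycle hs x y) = ⁅s x, l y⁆ - ⁅s y, l x⁆ - l ⁅x, y⁆)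

/-- The derivation `x ↦ φ (x - s (p x)) + l (p x)` extending an equivariant map `φ` from an ideal
`I` to a module on which `I` acts trivially, when `φ ∘ β` is the coboundary of `l`. -/
def extendDerivation : LieDerivation R L M where
  toLinearMap := (φ : I →ₗ[R] M) ∘ₗ sectionRetraction hs + l ∘ₗ I.toSubmodule.mkQ
  leibniz' x y := by
    change φ (sectionRetraction hs ⁅x, y⁆) + l (LieSubmodule.Quotient.mk ⁅x, y⁆) =
      ⁅x, φ (sectionRetraction hs y) + l (LieSubmodule.Quotient.mk y)⁆ -
        ⁅y, φ (sectionRetraction hs x) + l (LieSubmodule.Quotient.mk x)⁆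
    rw [map_sectionRetraction_lie, hl, section_mk_lie hs, section_mk_lie hs,
      LieSubmodule.Quotient.mk_bracket, lie_add, lie_add]
    abel

theorem extendDerivation_coe (m : I) : extendDerivation hs φ l hl m = φ m := by
  change φ (sectionRetraction hs m) + l (LieSubmodule.Quotient.mk m) = φ m
  rw [sectionRetraction_coe, LieSubmodule.Quotient.mk_eq_zero'.2 m.2, map_zero, add_zero]

end Derivation

section AbelianIdeal

variable {R L : Type*} [CommRing R] [LieRing L] [LieAlgebra R L] {I : LieIdeal R L}
  [IsLieAbelian I]

/-- The Lie algebra endomorphism `id + D` attached to a derivation `D` into an abelian ideal. -/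
def idAddDerivation (D : LieDerivation R L I) : L →ₗ⁅R⁆ L where
  toLinearMap := LinearMap.id + I.toSubmodule.subtype ∘ₗ (D : L →ₗ[R] I)
  map_lie' {x y} := by
    change ⁅x, y⁆ + (D ⁅x, y⁆ : L) = ⁅x + (D x : L), y + (D y : L)⁆
    have hD : ⁅(D x : L), (D y : L)⁆ = 0 := congr_arg Subtype.val (trivial_lie_zero I I (D x) (D y))
    rw [D.apply_lie_eq_sub, LieSubmodule.coe_sub, LieSubmodule.coe_bracket,
      LieSubmodule.coe_bracket, add_lie, lie_add, lie_add, hD, ← lie_skew (D x : L) y]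
    abel

theorem idAddDerivation_apply (D : LieDerivation R L I) (x : L) : idAddDerivation D x = x + D x :=
  rfl

theorem stmt13_general {s : (L ⧸ I) →ₗ[R] L}
    (hs : Function.RightInverse s (LieSubmodule.Quotient.mk (N := I)))
    (φ : I →ₗ⁅R,L⁆ I) (l : (L ⧸ I) →ₗ[R] I)
    (hl : ∀ x y, φ (sectionCocycle hs x y) = ⁅s x, l y⁆ - ⁅s y, l x⁆ - l ⁅x, y⁆) :
    ∃ f : L →ₗ⁅R⁆ L, (∀ x, f x - x ∈ I) ∧ ∀ m : I, f m = m + (φ m : L) := by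
  refine ⟨idAddDerivation (extendDerivation hs φ l hl), fun x => ?_, fun m => ?_⟩
  · rw [idAddDerivation_apply, add_sub_cancel_left]
    exact SetLike.coe_mem _
  · rw [idAddDerivation_apply, extendDerivation_coe]

end AbelianIdeal

/-- If `φ` is an `e`-equivariant endomorphism of the abelian ideal `a` such that
`φ ∘ β` is a coboundary, then `φ` extends to a Lie algebra endomorphism `f` of `e`
with `f x - x ∈ a` for all `x` and `f m = m + φ m` on `a`. -/
theorem stmt13 {F : Type*} [Field F] [CharZero F]
    {e : Type*} [LieRing e] [LieAlgebra F e]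
    (a : LieIdeal F e)
    (hab : ∀ m ∈ a, ∀ n ∈ a, ⁅m, n⁆ = (0 : e))
    (s : (e ⧸ a) →ₗ[F] e)
    (hs : ∀ x : e ⧸ a, LieSubmodule.Quotient.mk (N := a) (s x) = x)
    (φ : a →ₗ[F] a)
    (hφ : ∀ (x : e) (m : a), φ ⁅x, m⁆ = ⁅x, φ m⁆)
    (hcob : ∃ l : (e ⧸ a) →ₗ[F] e, (∀ x, l x ∈ a) ∧
      ∀ (x y : e ⧸ a) (hxy : lieBeta a s x y ∈ a),
        (φ ⟨lieBeta a s x y, hxy⟩ : e) = ⁅s x, l y⁆ - ⁅s y, l x⁆ - l ⁅x, y⁆) :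
    ∃ f : e →ₗ⁅F⁆ e, (∀ x, f x - x ∈ a) ∧ ∀ m : a, f m = m + (φ m : e) := by
  obtain ⟨l, hla, hl⟩ := hcob
  have : IsLieAbelian a := ⟨fun m n => Subtype.ext (hab m m.2 n n.2)⟩
  exact stmt13_general hs { φ with map_lie' := hφ _ _ } (l.codRestrict a.toSubmodule hla)
    fun x y => Subtype.ext (hl x y _)
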